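/- Let D′ ⋐ D ⊂ ℝ^{2n+1} be bounded open sets, let k ≥ 0, and set s = 2k + n + 2. Then there exists a constant C > 0 such that for every smooth function f : cl(D) → ℝ^m and every ordinary multi-index α ∈ ℕ^{2n+1} with |α| ≤ k, one has sup_{x ∈ cl(D′)} |∂^α f(x)| ≤ C ‖f‖_{D,s}. In particular, the C^k(cl(D′))-norm of f is bounded by a constant times ‖f‖_{D,s}. -/

import Mathlib

open MeasureTheory Bornology

noncomputable section

variable {E : Type*} [NormedAddCommGroup E] [NormedSpace ℝ E]

/-- The standard contact form `η₀ = dx^{2n+1} - Σ x^{n+j} dx^j` on `ℝ^{2n+1}`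
(0-indexed coordinates): `η₀(x)(v) = v_{2n} - Σ_{j<n} x_{n+j} v_j`. -/
def eta0 (n : ℕ) (x v : Fin (2*n+1) → ℝ) : ℝ :=
  v ⟨2*n, by omega⟩ -
    ∑ j : Fin n, x ⟨n + j, by have := j.2; omega⟩ * v ⟨j, by have := j.2; omega⟩

/-- `dη₀ = Σ_{j<n} dx^j ∧ dx^{n+j}`. -/
def dEta0 (n : ℕ) (u v : Fin (2*n+1) → ℝ) : ℝ :=
  ∑ j : Fin n,
    (u ⟨j, by have := j.2; omega⟩ * v ⟨n + j, by have := j.2; omega⟩ -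
     u ⟨n + j, by have := j.2; omega⟩ * v ⟨j, by have := j.2; omega⟩)

/-- The horizontal vector fields: for `j < n`, `X_j = ∂_j + x_{n+j} ∂_{2n}`;
for `n ≤ j < 2n`, `X_j = ∂_j` (0-indexed). -/
def Xvec (n : ℕ) (j : Fin (2*n)) (x : Fin (2*n+1) → ℝ) : Fin (2*n+1) → ℝ :=
  if h : (j : ℕ) < n then
    (Pi.single (⟨j, by omega⟩ : Fin (2*n+1)) 1 : Fin (2*n+1) → ℝ)
      + x ⟨n + j, by omega⟩ • (Pi.single (⟨2*n, by omega⟩ : Fin (2*n+1)) 1 : Fin (2*n+1) → ℝ)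
  else
    (Pi.single (⟨j, by have := j.2; omega⟩ : Fin (2*n+1)) 1 : Fin (2*n+1) → ℝ)

/-- The horizontal derivative `X_j f`. -/
def hDeriv (n : ℕ) (j : Fin (2*n)) (f : (Fin (2*n+1) → ℝ) → E)
    (x : Fin (2*n+1) → ℝ) : E :=
  fderiv ℝ f x (Xvec n j x)

/-- Iterated horizontal derivative `X_I f = X_{i₁} ⋯ X_{i_t} f`. -/
def XI (n : ℕ) : List (Fin (2*n)) → ((Fin (2*n+1) → ℝ) → E) → ((Fin (2*n+1) → ℝ) → E)
  | [], f => f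
  | j :: I, f => hDeriv n j (XI n I f)

/-- Squared Folland–Stein norm `‖f‖_{D,s}² = Σ_{|I| ≤ s} ∫_D ‖X_I f‖²`. -/
def fsNormSq (n : ℕ) (D : Set (Fin (2*n+1) → ℝ)) (s : ℕ)
    (f : (Fin (2*n+1) → ℝ) → E) : ℝ :=
  ∑ t ∈ Finset.range (s+1), ∑ I : Fin t → Fin (2*n),
    ∫ x in D, ‖XI n (List.ofFn I) f x‖^2

/-- The Folland–Stein norm `‖f‖_{D,s}`. -/
def fsNorm (n : ℕ) (D : Set (Fin (2*n+1) → ℝ)) (s : ℕ)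
    (f : (Fin (2*n+1) → ℝ) → E) : ℝ :=
  Real.sqrt (fsNormSq n D s f)

/-- Ordinary partial derivative `∂_i f`. -/
def pDeriv (n : ℕ) (i : Fin (2*n+1)) (f : (Fin (2*n+1) → ℝ) → E)
    (x : Fin (2*n+1) → ℝ) : E :=
  fderiv ℝ f x (Pi.single i 1 : Fin (2*n+1) → ℝ)

/-- Iterated ordinary partial derivative. -/
def pI (n : ℕ) : List (Fin (2*n+1)) → ((Fin (2*n+1) → ℝ) → E) → ((Fin (2*n+1) → ℝ) → E)
  | [], f => f
  | i :: I, f => pDeriv n i (pI n I f)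

/-- The Reeb derivative `T₀ f = ∂_{2n} f` (0-indexed). -/
def T0Deriv (n : ℕ) (f : (Fin (2*n+1) → ℝ) → E) (x : Fin (2*n+1) → ℝ) : E :=
  fderiv ℝ f x (Pi.single (⟨2*n, by omega⟩ : Fin (2*n+1)) 1 : Fin (2*n+1) → ℝ)

/-- `X` is a contact vector field on `D`:  `dη₀(X, X_j) + X_j(η₀(X)) = 0` for all
horizontal `X_j`. -/
def IsContactVF (n : ℕ) (D : Set (Fin (2*n+1) → ℝ))
    (X : (Fin (2*n+1) → ℝ) → (Fin (2*n+1) → ℝ)) : Prop :=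
  ∀ j : Fin (2*n), ∀ x ∈ D,
    dEta0 n (X x) (Xvec n j x) + hDeriv n j (fun y => eta0 n y (X y)) x = 0

/-- The contact vector field with generating function `g`:
`X_g = g T₀ + Σ_j (-(X_{n+j} g) X_j + (X_j g) X_{n+j})`. -/
def genVF (n : ℕ) (g : (Fin (2*n+1) → ℝ) → ℝ) (x : Fin (2*n+1) → ℝ) :
    Fin (2*n+1) → ℝ :=
  g x • (Pi.single (⟨2*n, by omega⟩ : Fin (2*n+1)) 1 : Fin (2*n+1) → ℝ)
  + ∑ j : Fin n,
      (-(hDeriv n (⟨n + j, by have := j.2; omega⟩ : Fin (2*n)) g x) •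
          Xvec n (⟨j, by have := j.2; omega⟩ : Fin (2*n)) x
        + (hDeriv n (⟨j, by have := j.2; omega⟩ : Fin (2*n)) g x) •
          Xvec n (⟨n + j, by have := j.2; omega⟩ : Fin (2*n)) x)

/-!
Average a function over the Heisenberg dilates `δ_r` of a small neighbourhood of `0`, translated
to a point `a`. The averages tend to the value at `a` as `r → 0`, and `d/dr` of an average only
involves averages of first horizontal derivatives: the generator of the dilations has a Reeb
component of size `r`, and the Reeb field is a commutator of horizontal fields, one of which is
integrated by parts onto the weight at the price of `1 / r`. By Cauchy-Schwarz and
`det δ_r = r ^ (2n + 2)` an average of an `L²` function is `O(r ^ -(n + 1))`, and integrating in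
`r` gains one power per horizontal derivative. So `n + 2` horizontal derivatives in
`L²` control the value at `a`, and a coordinate derivative costs at most two further horizontal
ones.
-/

open scoped ContDiff NNReal ENNReal

/-! ### Heisenberg geometry of `ℝ^{2n+1}` -/

section Geometry

/-- The space `ℝ^{2n+1}` carrying the Heisenberg structure, with its sup norm. The Reeb coordinate
is the last one. -/
abbrev Heis (n : ℕ) : Type := Fin (2 * n + 1) → ℝ

/-- The Reeb vector `∂_{2n}` of the contact form `eta0`. -/
def reebVec (n : ℕ) : Heis n := Pi.single (Fin.last (2 * n)) 1

/-- The coefficient of the Reeb vector in `Xvec n j`, as a linear form in the base point. -/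
def reebCoeff (n : ℕ) (j : Fin (2 * n)) : Heis n →L[ℝ] ℝ :=
  if h : (j : ℕ) < n then ContinuousLinearMap.proj ⟨n + j, by omega⟩ else 0

/-- The index of `X_j`, for `j < n`. -/
def xIdx {n : ℕ} (j : Fin n) : Fin (2 * n) := ⟨j, by omega⟩

/-- The index of `X_{n+j}`, the field conjugate to `X_j`, for `j < n`. -/
def yIdx {n : ℕ} (j : Fin n) : Fin (2 * n) := ⟨n + j, by omega⟩

variable {n : ℕ}

lemma Xvec_eq (j : Fin (2 * n)) (x : Heis n) :
    Xvec n j x = Pi.single j.castSucc 1 + reebCoeff n j x • reebVec n := by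
  unfold Xvec reebCoeff
  split_ifs
  · rfl
  · simp only [zero_apply, zero_smul, add_zero]
    rfl

lemma reebCoeff_reebVec (j : Fin (2 * n)) : reebCoeff n j (reebVec n) = 0 := by
  unfold reebCoeff
  split_ifs with h
  · have : n + (j : ℕ) ≠ 2 * n := by omega
    simp [reebVec, Fin.ext_iff, this]
  · rfl

lemma reebCoeff_Xvec (i j : Fin (2 * n)) (x : Heis n) :
    reebCoeff n i (Xvec n j x) = reebCoeff n i (Pi.single j.castSucc 1) := by
  rw [Xvec_eq, map_add, map_smul, reebCoeff_reebVec, smul_zero, add_zero]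

lemma reebCoeff_xIdx_Xvec_yIdx (j : Fin n) (x : Heis n) :
    reebCoeff n (xIdx j) (Xvec n (yIdx j) x) = 1 := by
  rw [reebCoeff_Xvec, reebCoeff, dif_pos (show (xIdx j : ℕ) < n from j.2)]
  exact Pi.single_eq_same _ _

lemma reebCoeff_yIdx (j : Fin n) : reebCoeff n (yIdx j) = 0 :=
  dif_neg (by simp [yIdx])

lemma Xvec_castSucc (j i : Fin (2 * n)) (x : Heis n) :
    Xvec n j x i.castSucc = (Pi.single j 1 : Fin (2 * n) → ℝ) i := by
  simp [Xvec_eq, reebVec, Pi.single_apply]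

lemma Xvec_last (j : Fin (2 * n)) (x : Heis n) :
    Xvec n j x (Fin.last (2 * n)) = reebCoeff n j x := by
  simp [Xvec_eq, reebVec, (Fin.castSucc_lt_last j).ne']

lemma Xvec_add (j : Fin (2 * n)) (x v : Heis n) :
    Xvec n j (x + v) = Xvec n j x + reebCoeff n j v • reebVec n := by
  rw [Xvec_eq, Xvec_eq, map_add, add_smul, add_assoc]

lemma hasFDerivAt_Xvec (j : Fin (2 * n)) (x : Heis n) :
    HasFDerivAt (Xvec n j) ((reebCoeff n j).smulRight (reebVec n)) x := by
  rw [funext (Xvec_eq j)]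
  exact ((reebCoeff n j).hasFDerivAt.smul_const _).const_add _

lemma contDiff_Xvec (j : Fin (2 * n)) : ContDiff ℝ ∞ (Xvec n j) := by
  rw [funext (Xvec_eq j)]
  exact contDiff_const.add ((reebCoeff n j).contDiff.smul contDiff_const)

/-- The horizontal vector `∑ⱼ uⱼ Xⱼ(a)` at `a` with the horizontal components of `u`. -/
def horizontalLift (a : Heis n) : Heis n →L[ℝ] Heis n :=
  ∑ j : Fin (2 * n), (ContinuousLinearMap.proj (R := ℝ) j.castSucc).smulRight (Xvec n j a)

lemma horizontalLift_apply (a u : Heis n) :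
    horizontalLift a u = ∑ j : Fin (2 * n), u j.castSucc • Xvec n j a := by
  simp [horizontalLift]

lemma horizontalLift_add (a v u : Heis n) : horizontalLift (a + v) u =
    horizontalLift a u + (∑ j : Fin (2 * n), u j.castSucc * reebCoeff n j v) • reebVec n := by
  simp only [horizontalLift_apply, Xvec_add, smul_add, smul_smul, Finset.sum_add_distrib,
    Finset.sum_smul]

lemma horizontalLift_reebVec (a : Heis n) : horizontalLift a (reebVec n) = 0 := by
  simp [horizontalLift_apply, reebVec, Fin.castSucc_ne_last]

lemma horizontalLift_Xvec (a u : Heis n) (j : Fin (2 * n)) :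
    horizontalLift a (Xvec n j u) = Xvec n j a := by
  simp [horizontalLift_apply, Xvec_castSucc, Pi.single_apply]

lemma horizontalLift_castSucc (a u : Heis n) (i : Fin (2 * n)) :
    horizontalLift a u i.castSucc = u i.castSucc := by
  simp [horizontalLift_apply, Xvec_castSucc, Pi.single_apply]

lemma eq_horizontalLift_add_smul_reebVec (a u : Heis n) :
    ∃ c : ℝ, u = horizontalLift a u + c • reebVec n := by
  refine ⟨u (Fin.last _) - horizontalLift a u (Fin.last _), funext fun i => ?_⟩
  cases i using Fin.lastCases with
  | last => simp [reebVec]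
  | cast i => simp [reebVec, horizontalLift_castSucc, Fin.castSucc_ne_last]

lemma reebCoeff_horizontalLift (a u : Heis n) (j : Fin (2 * n)) :
    reebCoeff n j (horizontalLift a u) = reebCoeff n j u := by
  obtain ⟨c, hc⟩ := eq_horizontalLift_add_smul_reebVec a u
  conv_rhs => rw [hc]
  rw [map_add, map_smul, reebCoeff_reebVec, smul_zero, add_zero]

/-- The linear part of `dilateAt a r`. -/
def dilateAtCLM (a : Heis n) (r : ℝ) : Heis n →L[ℝ] Heis n :=
  r • horizontalLift a +
    r ^ 2 • (ContinuousLinearMap.proj (R := ℝ) (Fin.last (2 * n))).smulRight (reebVec n)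

/-- The left translate by `a` of the Heisenberg dilation `δ_r`, which scales the horizontal
coordinates by `r` and the Reeb coordinate by `r ^ 2`. -/
def dilateAt (a : Heis n) (r : ℝ) (u : Heis n) : Heis n := a + dilateAtCLM a r u

lemma dilateAtCLM_apply (a : Heis n) (r : ℝ) (u : Heis n) : dilateAtCLM a r u =
    r • horizontalLift a u + (r ^ 2 * u (Fin.last (2 * n))) • reebVec n := by
  simp [dilateAtCLM, smul_smul]

lemma dilateAt_apply_zero (a : Heis n) (r : ℝ) : dilateAt a r 0 = a := by
  simp [dilateAt]

lemma dilateAt_zero (a u : Heis n) : dilateAt a 0 u = a := by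
  simp [dilateAt, dilateAtCLM_apply]

lemma hasFDerivAt_dilateAt (a : Heis n) (r : ℝ) (u : Heis n) :
    HasFDerivAt (dilateAt a r) (dilateAtCLM a r) u :=
  (dilateAtCLM a r).hasFDerivAt.const_add a

lemma contDiff_dilateAt (a : Heis n) (r : ℝ) : ContDiff ℝ ∞ (dilateAt a r) :=
  contDiff_const.add (dilateAtCLM a r).contDiff

lemma continuous_dilateAt :
    Continuous fun p : (Heis n × ℝ) × Heis n => dilateAt p.1.1 p.1.2 p.2 := by
  have hX (j : Fin (2 * n)) : Continuous (Xvec n j) := (contDiff_Xvec j).continuous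
  simp only [dilateAt, dilateAtCLM_apply, horizontalLift_apply]
  fun_prop

lemma dilateAtCLM_Xvec (a : Heis n) (r : ℝ) (u : Heis n) (j : Fin (2 * n)) :
    dilateAtCLM a r (Xvec n j u) = r • Xvec n j (dilateAt a r u) := by
  rw [dilateAt, Xvec_add, dilateAtCLM_apply, dilateAtCLM_apply, horizontalLift_Xvec, Xvec_last]
  simp only [map_add, map_smul, reebCoeff_horizontalLift, reebCoeff_reebVec, smul_eq_mul]
  module

/-- The Reeb component of the generator `∑ⱼ uⱼ ∂ⱼ + 2 u_{2n} ∂_{2n}` of the dilations, in the frame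
of the `Xⱼ` and the Reeb vector. -/
def eulerReebCoeff (u : Heis n) : ℝ :=
  2 * u (Fin.last (2 * n)) - ∑ j : Fin (2 * n), u j.castSucc * reebCoeff n j u

lemma contDiff_eulerReebCoeff : ContDiff ℝ ∞ (eulerReebCoeff (n := n)) := by
  unfold eulerReebCoeff
  have (j : Fin (2 * n)) := (reebCoeff n j).contDiff (n := ∞)
  fun_prop

lemma hasDerivAt_dilateAt (a : Heis n) (r : ℝ) (u : Heis n) :
    HasDerivAt (fun s => dilateAt a s u)
      (horizontalLift (dilateAt a r u) u + (r * eulerReebCoeff u) • reebVec n) r := by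
  simp only [dilateAt, dilateAtCLM_apply]
  refine ((((hasDerivAt_id r).smul_const _).add
    (((hasDerivAt_pow 2 r).mul_const _).smul_const _)).const_add a).congr_deriv ?_
  simp only [horizontalLift_add, eulerReebCoeff, map_add, map_smul, reebCoeff_horizontalLift,
    reebCoeff_reebVec, smul_eq_mul, mul_zero, add_zero, mul_left_comm _ r, ← Finset.mul_sum]
  module

lemma det_dilateAtCLM (a : Heis n) (r : ℝ) :
    LinearMap.det (dilateAtCLM a r : Heis n →ₗ[ℝ] Heis n) = r ^ (2 * n + 2) := by
  have hX (i j : Fin (2 * n)) : dilateAtCLM a r (Pi.single j.castSucc 1) i.castSucc =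
      r * (Pi.single j 1 : Fin (2 * n) → ℝ) i := by
    simp [dilateAtCLM_apply, horizontalLift_castSucc, reebVec, Fin.castSucc_ne_last,
      Pi.single_apply]
  have hT : dilateAtCLM a r (Pi.single (Fin.last (2 * n)) 1) = r ^ 2 • reebVec n := by
    have := horizontalLift_reebVec a
    rw [reebVec] at this
    simp [dilateAtCLM_apply, this]
  rw [← LinearMap.det_toMatrix', Matrix.det_of_isLowerTriangular, Fin.prod_univ_castSucc]
  · simp only [LinearMap.toMatrix'_apply, ContinuousLinearMap.coe_coe, hX, hT, reebVec,
      Pi.smul_apply, Pi.single_eq_same, smul_eq_mul, mul_one, Finset.prod_const, Finset.card_univ,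
      Fintype.card_fin, pow_add]
  · intro i k (hik : i < k)
    rw [LinearMap.toMatrix'_apply, ContinuousLinearMap.coe_coe]
    cases i using Fin.lastCases with
    | last => exact absurd hik (Fin.le_last k).not_gt
    | cast i =>
      cases k using Fin.lastCases with
      | last => simp [hT, reebVec, Fin.castSucc_ne_last]
      | cast k => simp [hX, (Fin.castSucc_lt_castSucc_iff.1 hik).ne]

end Geometry

/-! ### Horizontal, Reeb and coordinate derivatives -/

section Derivatives

variable {n : ℕ} {f g : Heis n → E} {x : Heis n}

lemma contDiff_hDeriv (j : Fin (2 * n)) (hf : ContDiff ℝ ∞ f) : ContDiff ℝ ∞ (hDeriv n j f) :=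
  (hf.fderiv_right (by simp)).clm_apply (contDiff_Xvec j)

lemma contDiff_pDeriv (i : Fin (2 * n + 1)) (hf : ContDiff ℝ ∞ f) : ContDiff ℝ ∞ (pDeriv n i f) :=
  (hf.fderiv_right (by simp)).clm_apply contDiff_const

lemma contDiff_T0Deriv (hf : ContDiff ℝ ∞ f) : ContDiff ℝ ∞ (T0Deriv n f) :=
  contDiff_pDeriv (Fin.last (2 * n)) hf

lemma contDiff_XI (J : List (Fin (2 * n))) (hf : ContDiff ℝ ∞ f) : ContDiff ℝ ∞ (XI n J f) := by
  induction J with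
  | nil => exact hf
  | cons j J ih => exact contDiff_hDeriv j ih

lemma XI_append (I J : List (Fin (2 * n))) (f : Heis n → E) :
    XI n (I ++ J) f = XI n I (XI n J f) := by
  induction I with
  | nil => rfl
  | cons j I ih => exact congrArg (hDeriv n j) ih

lemma pI_append (I J : List (Fin (2 * n + 1))) (f : Heis n → E) :
    pI n (I ++ J) f = pI n I (pI n J f) := by
  induction I with
  | nil => rfl
  | cons i I ih => exact congrArg (pDeriv n i) ih

lemma hDeriv_eq (j : Fin (2 * n)) (f : Heis n → E) (x : Heis n) :
    hDeriv n j f x = pDeriv n j.castSucc f x + reebCoeff n j x • T0Deriv n f x := by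
  rw [hDeriv, Xvec_eq, map_add, map_smul]
  rfl

lemma hDeriv_add (j : Fin (2 * n)) (hf : DifferentiableAt ℝ f x) (hg : DifferentiableAt ℝ g x) :
    hDeriv n j (fun y => f y + g y) x = hDeriv n j f x + hDeriv n j g x := by
  simp only [hDeriv, fderiv_fun_add hf hg, add_apply]

lemma hDeriv_smul (j : Fin (2 * n)) {p : Heis n → ℝ} (hp : DifferentiableAt ℝ p x)
    (hf : DifferentiableAt ℝ f x) :
    hDeriv n j (fun y => p y • f y) x = p x • hDeriv n j f x + hDeriv n j p x • f x := by
  simp [hDeriv, fderiv_fun_smul hp hf]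

lemma hDeriv_hDeriv (i j : Fin (2 * n)) (hf : ContDiff ℝ 2 f) (x : Heis n) :
    hDeriv n i (hDeriv n j f) x = fderiv ℝ (fderiv ℝ f) x (Xvec n i x) (Xvec n j x) +
      reebCoeff n j (Xvec n i x) • T0Deriv n f x := by
  have hdf : DifferentiableAt ℝ (fderiv ℝ f) x :=
    (hf.fderiv_right (m := 1) (by norm_num)).differentiable one_ne_zero x
  change fderiv ℝ (fun y => fderiv ℝ f y (Xvec n j y)) x (Xvec n i x) = _
  rw [(hdf.hasFDerivAt.clm_apply (hasFDerivAt_Xvec j x)).fderiv]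
  simp only [add_apply, ContinuousLinearMap.comp_apply, ContinuousLinearMap.smulRight_apply,
    ContinuousLinearMap.flip_apply, map_smul, add_comm]
  rfl

lemma T0Deriv_eq_commutator (j : Fin n) (hf : ContDiff ℝ 2 f) (x : Heis n) :
    T0Deriv n f x =
      hDeriv n (yIdx j) (hDeriv n (xIdx j) f) x - hDeriv n (xIdx j) (hDeriv n (yIdx j) f) x := by
  have hsymm : IsSymmSndFDerivAt ℝ f x := hf.contDiffAt.isSymmSndFDerivAt (by simp)
  rw [hDeriv_hDeriv _ _ hf, hDeriv_hDeriv _ _ hf, hsymm.eq, reebCoeff_xIdx_Xvec_yIdx,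
    reebCoeff_yIdx, zero_apply, one_smul, zero_smul]
  abel

lemma hDeriv_comp_dilateAt (j : Fin (2 * n)) (hg : Differentiable ℝ g) (a : Heis n) (r : ℝ)
    (u : Heis n) :
    hDeriv n j (fun v => g (dilateAt a r v)) u = r • hDeriv n j g (dilateAt a r u) := by
  have hcomp := (hg (dilateAt a r u)).hasFDerivAt.comp u (hasFDerivAt_dilateAt a r u)
  change fderiv ℝ (g ∘ dilateAt a r) u _ = _
  rw [hcomp.fderiv, ContinuousLinearMap.comp_apply, dilateAtCLM_Xvec, map_smul, hDeriv]

end Derivatives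

/-! ### Test functions and integration by parts -/

section TestFunctions

lemma integral_smul_fderiv_eq_zero {V : Type*} [NormedAddCommGroup V] [NormedSpace ℝ V]
    [FiniteDimensional ℝ V] [MeasurableSpace V] [BorelSpace V] {μ : Measure V} [μ.IsAddHaarMeasure]
    {p : V → ℝ} {h : V → E} {v : V} (hp : ContDiff ℝ 1 p) (hpv : ∀ x, fderiv ℝ p x v = 0)
    (hh : ContDiff ℝ 1 h) (hhc : HasCompactSupport h) : ∫ x, p x • fderiv ℝ h x v ∂μ = 0 := by
  have hh' : Continuous fun x => fderiv ℝ h x v :=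
    (hh.continuous_fderiv one_ne_zero).clm_apply continuous_const
  rw [integral_smul_fderiv_eq_neg_fderiv_smul_of_integrable]
  · simp [hpv]
  · simp [hpv]
  · exact (hp.continuous.smul hh').integrable_of_hasCompactSupport (hhc.fderiv_apply ℝ v).smul_left
  · exact (hp.continuous.smul hh.continuous).integrable_of_hasCompactSupport hhc.smul_left
  · exact fun x _ => hp.differentiable one_ne_zero x
  · exact fun x _ => hh.differentiable one_ne_zero x

variable {n : ℕ} {U : Set (Heis n)} {φ : Heis n → ℝ} {g : Heis n → E}

lemma integral_hDeriv_eq_zero (j : Fin (2 * n)) {h : Heis n → E} (hh : ContDiff ℝ 1 h)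
    (hhc : HasCompactSupport h) : ∫ x, hDeriv n j h x = 0 := by
  have hcont (v : Heis n) : Continuous fun x => fderiv ℝ h x v :=
    (hh.continuous_fderiv one_ne_zero).clm_apply continuous_const
  have hpartial : ∫ x, pDeriv n j.castSucc h x = 0 := by
    simpa [pDeriv] using integral_smul_fderiv_eq_zero (p := fun _ => 1)
      (v := Pi.single j.castSucc 1) contDiff_const (by simp) hh hhc
  have hreeb : ∫ x, reebCoeff n j x • T0Deriv n h x = 0 :=
    integral_smul_fderiv_eq_zero (reebCoeff n j).contDiff
      (fun x => by rw [ContinuousLinearMap.fderiv]; exact reebCoeff_reebVec j) hh hhc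
  simp only [hDeriv_eq]
  rw [integral_add, hpartial, hreeb, add_zero]
  · exact (hcont _).integrable_of_hasCompactSupport (hhc.fderiv_apply ℝ _)
  · exact ((reebCoeff n j).continuous.smul (hcont _)).integrable_of_hasCompactSupport
      (hhc.fderiv_apply ℝ _).smul_left

/-- `φ` is a test function on `U`: smooth, with compact support contained in `U`. -/
structure IsTestFunction (U : Set (Heis n)) (φ : Heis n → ℝ) : Prop where
  contDiff : ContDiff ℝ ∞ φ
  hasCompactSupport : HasCompactSupport φ
  tsupport_subset : tsupport φ ⊆ U

namespace IsTestFunction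

lemma mul (hφ : IsTestFunction U φ) {p : Heis n → ℝ} (hp : ContDiff ℝ ∞ p) :
    IsTestFunction U (fun u => p u * φ u) where
  contDiff := hp.mul hφ.contDiff
  hasCompactSupport := hφ.hasCompactSupport.mul_left
  tsupport_subset := tsupport_mul_subset_right.trans hφ.tsupport_subset

protected lemma hDeriv (hφ : IsTestFunction U φ) (j : Fin (2 * n)) :
    IsTestFunction U (hDeriv n j φ) := by
  have hsupp : tsupport (hDeriv n j φ) ⊆ tsupport φ := by
    refine (closure_mono ?_).trans (tsupport_fderiv_subset ℝ)
    refine Function.support_subset_iff'.2 fun u hu => ?_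
    rw [hDeriv, Function.notMem_support.1 hu, zero_apply]
  exact ⟨contDiff_hDeriv j hφ.contDiff,
    hφ.hasCompactSupport.of_isClosed_subset (isClosed_tsupport _) hsupp,
    hsupp.trans hφ.tsupport_subset⟩

lemma integrable_smul (hφ : IsTestFunction U φ) (hg : Continuous g) :
    Integrable fun u => φ u • g u :=
  (hφ.contDiff.continuous.smul hg).integrable_of_hasCompactSupport
    hφ.hasCompactSupport.smul_right

lemma memLp (hφ : IsTestFunction U φ) : MemLp φ 2 :=
  hφ.contDiff.continuous.memLp_of_hasCompactSupport hφ.hasCompactSupport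

lemma integral_smul_hDeriv (hφ : IsTestFunction U φ) (hg : ContDiff ℝ ∞ g) (j : Fin (2 * n)) :
    ∫ u, φ u • hDeriv n j g u = -∫ u, hDeriv n j φ u • g u := by
  have hzero := integral_hDeriv_eq_zero j (h := fun u => φ u • g u)
    ((hφ.contDiff.smul hg).of_le (by simp)) hφ.hasCompactSupport.smul_right
  simp only [hDeriv_smul j (hφ.contDiff.differentiable (by simp) _)
    (hg.differentiable (by simp) _)] at hzero
  rw [integral_add (hφ.integrable_smul (contDiff_hDeriv j hg).continuous)
    ((hφ.hDeriv j).integrable_smul hg.continuous)] at hzero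
  exact eq_neg_of_add_eq_zero_left hzero

end IsTestFunction

end TestFunctions

/-! ### Averages over dilates -/

section Averages

lemma hasDerivAt_integral_smul_of_hasCompactSupport {X : Type*} [TopologicalSpace X]
    [SecondCountableTopology X] [MeasurableSpace X] [OpensMeasurableSpace X] {μ : Measure X}
    [IsFiniteMeasureOnCompacts μ] {φ : X → ℝ} {G G' : ℝ → X → E} (hφ : Continuous φ)
    (hφc : HasCompactSupport φ) (hG : ∀ s, Continuous (G s))
    (hG' : Continuous (Function.uncurry G')) (hGG' : ∀ s x, HasDerivAt (G · x) (G' s x) s) (r : ℝ) :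
    HasDerivAt (fun s => ∫ x, φ x • G s x ∂μ) (∫ x, φ x • G' r x ∂μ) r := by
  have hF' : Continuous fun p : ℝ × X => φ p.2 • G' p.1 p.2 := (hφ.comp continuous_snd).smul hG'
  obtain ⟨M, hM⟩ := ((isCompact_closedBall r 1).prod hφc.isCompact).exists_bound_of_continuousOn
    hF'.continuousOn
  refine (hasDerivAt_integral_of_dominated_loc_of_deriv_le (F := fun s x => φ x • G s x)
    (bound := (tsupport φ).indicator fun _ => M) (Metric.ball_mem_nhds r one_pos)
    (.of_forall fun s => (hφ.smul (hG s)).aestronglyMeasurable)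
    ((hφ.smul (hG r)).integrable_of_hasCompactSupport hφc.smul_right)
    (hF'.comp (Continuous.prodMk_right r)).aestronglyMeasurable
    (.of_forall fun x s hs => ?_) ?_
    (.of_forall fun x s _ => (hGG' s x).const_smul (φ x))).2
  · by_cases hx : x ∈ tsupport φ
    · rw [Set.indicator_of_mem hx]
      exact hM (s, x) ⟨Metric.ball_subset_closedBall hs, hx⟩
    · rw [Set.indicator_of_notMem hx, image_eq_zero_of_notMem_tsupport hx, zero_smul, norm_zero]
  · rw [integrable_indicator_iff (isClosed_tsupport φ).measurableSet]
    exact integrableOn_const hφc.isCompact.measure_lt_top.ne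

variable {n : ℕ} {U : Set (Heis n)} {φ : Heis n → ℝ} {g : Heis n → E}

/-- The average of `g`, weighted by `φ`, over the Heisenberg dilate of size `r` centred at `a`. -/
def dilationAverage (φ : Heis n → ℝ) (g : Heis n → E) (a : Heis n) (r : ℝ) : E :=
  ∫ u, φ u • g (dilateAt a r u)

lemma dilationAverage_zero [CompleteSpace E] (φ : Heis n → ℝ) (g : Heis n → E) (a : Heis n) :
    dilationAverage φ g a 0 = (∫ u, φ u) • g a := by
  simp only [dilationAverage, dilateAt_zero, integral_smul_const]

lemma IsTestFunction.integrable_smul_comp_dilateAt (hφ : IsTestFunction U φ) (hg : Continuous g)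
    (a : Heis n) (r : ℝ) : Integrable fun u => φ u • g (dilateAt a r u) :=
  hφ.integrable_smul (hg.comp (contDiff_dilateAt a r).continuous)

lemma dilationAverage_sub (hφ : IsTestFunction U φ) {g h : Heis n → E} (hg : Continuous g)
    (hh : Continuous h) (a : Heis n) (r : ℝ) :
    dilationAverage φ (fun x => g x - h x) a r =
      dilationAverage φ g a r - dilationAverage φ h a r := by
  simp only [dilationAverage, smul_sub]
  exact integral_sub (hφ.integrable_smul_comp_dilateAt hg a r)
    (hφ.integrable_smul_comp_dilateAt hh a r)

lemma smul_dilationAverage_hDeriv (hφ : IsTestFunction U φ) (hg : ContDiff ℝ ∞ g)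
    (a : Heis n) (r : ℝ) (j : Fin (2 * n)) :
    r • dilationAverage φ (hDeriv n j g) a r = -dilationAverage (hDeriv n j φ) g a r := by
  have hibp := hφ.integral_smul_hDeriv (g := fun u => g (dilateAt a r u))
    (hg.comp (contDiff_dilateAt a r)) j
  simp only [hDeriv_comp_dilateAt j (hg.differentiable (by simp)), smul_comm _ r, integral_smul]
    at hibp
  exact hibp

lemma smul_dilationAverage_T0Deriv (hφ : IsTestFunction U φ)
    (hg : ContDiff ℝ ∞ g) (a : Heis n) (r : ℝ) (j : Fin n) :
    r • dilationAverage φ (T0Deriv n g) a r =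
      dilationAverage (hDeriv n (xIdx j) φ) (hDeriv n (yIdx j) g) a r -
        dilationAverage (hDeriv n (yIdx j) φ) (hDeriv n (xIdx j) g) a r := by
  have hcomm : T0Deriv n g = fun x =>
      hDeriv n (yIdx j) (hDeriv n (xIdx j) g) x - hDeriv n (xIdx j) (hDeriv n (yIdx j) g) x :=
    funext (T0Deriv_eq_commutator j (contDiff_infty.1 hg 2))
  have hcont (i k : Fin (2 * n)) : Continuous (hDeriv n i (hDeriv n k g)) :=
    (contDiff_hDeriv i (contDiff_hDeriv k hg)).continuous
  rw [hcomm, dilationAverage_sub hφ (hcont _ _) (hcont _ _), smul_sub,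
    smul_dilationAverage_hDeriv hφ (contDiff_hDeriv _ hg),
    smul_dilationAverage_hDeriv hφ (contDiff_hDeriv _ hg)]
  abel

lemma IsTestFunction.coord_mul (hφ : IsTestFunction U φ) (i : Fin (2 * n + 1)) :
    IsTestFunction U fun u => u i * φ u :=
  hφ.mul (contDiff_apply ℝ ℝ i)

lemma hasDerivAt_dilationAverage (hφ : IsTestFunction U φ) (hg : ContDiff ℝ ∞ g)
    (a : Heis n) (r : ℝ) :
    HasDerivAt (dilationAverage φ g a)
      (∑ i, dilationAverage (fun u => u i.castSucc * φ u) (hDeriv n i g) a r +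
        r • dilationAverage (fun u => eulerReebCoeff u * φ u) (T0Deriv n g) a r) r := by
  have hdilate : Continuous fun p : ℝ × Heis n => dilateAt a p.1 p.2 :=
    continuous_dilateAt.comp (by fun_prop : Continuous fun p : ℝ × Heis n => ((a, p.1), p.2))
  have hsum : Integrable fun u =>
      ∑ i : Fin (2 * n), (u i.castSucc * φ u) • hDeriv n i g (dilateAt a r u) :=
    integrable_finsetSum _ fun i _ =>
      (hφ.coord_mul _).integrable_smul_comp_dilateAt (contDiff_hDeriv i hg).continuous a r
  have hreeb : Integrable fun u => r • (eulerReebCoeff u * φ u) • T0Deriv n g (dilateAt a r u) :=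
    ((hφ.mul contDiff_eulerReebCoeff).integrable_smul_comp_dilateAt
      (contDiff_T0Deriv hg).continuous a r).smul r
  refine (hasDerivAt_integral_smul_of_hasCompactSupport (G := fun s u => g (dilateAt a s u))
    (G' := fun s u => ∑ i, u i.castSucc • hDeriv n i g (dilateAt a s u) +
      (s * eulerReebCoeff u) • T0Deriv n g (dilateAt a s u)) hφ.contDiff.continuous
    hφ.hasCompactSupport (fun s => hg.continuous.comp (contDiff_dilateAt a s).continuous)
    ?_ (fun s u => ?_) r).congr_deriv ?_
  · have hX (i : Fin (2 * n)) := (contDiff_hDeriv i hg).continuous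
    have hT := (contDiff_T0Deriv hg).continuous
    have hq := (contDiff_eulerReebCoeff (n := n)).continuous
    simp only [Function.uncurry_def]
    fun_prop
  · refine ((hg.differentiable (by simp) _).hasFDerivAt.comp_hasDerivAt s
      (hasDerivAt_dilateAt a s u)).congr_deriv ?_
    simp only [map_add, map_smul, horizontalLift_apply, map_sum]
    rfl
  · simp only [dilationAverage, ← integral_smul]
    rw [← integral_finsetSum _ fun i _ => (hφ.coord_mul _).integrable_smul_comp_dilateAt
      (contDiff_hDeriv i hg).continuous a r, ← integral_add hsum hreeb]
    congr 1 with u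
    simp only [smul_add, Finset.smul_sum, smul_smul, mul_comm, mul_left_comm]

end Averages

/-! ### The pointwise Sobolev inequality -/

section Sobolev

lemma volume_preimage_dilateAt {n : ℕ} (a : Heis n) {r : ℝ} (hr : 0 < r) (A : Set (Heis n)) :
    volume (dilateAt a r ⁻¹' A) = ENNReal.ofReal (r ^ (2 * n + 2))⁻¹ * volume A := by
  have hdet := det_dilateAtCLM a r
  have hpos : 0 < r ^ (2 * n + 2) := by positivity
  change volume (dilateAtCLM a r ⁻¹' ((a + ·) ⁻¹' A)) = _
  rw [Measure.addHaar_preimage_continuousLinearMap volume (by rw [hdet]; exact hpos.ne'),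
    measure_preimage_add, hdet, abs_of_pos (inv_pos.2 hpos)]

variable {n l : ℕ} {e : ℝ} {S U : Set (Heis n)} {φ : Heis n → ℝ} {g : Heis n → E} {N : ℝ≥0}

lemma map_dilateAt_restrict_le {a : Heis n} {r : ℝ} (hr : 0 < r)
    (hUS : Set.MapsTo (dilateAt a r) U S) :
    (volume.restrict U).map (dilateAt a r) ≤
      ENNReal.ofReal (r ^ (2 * n + 2))⁻¹ • volume.restrict S := by
  refine Measure.le_intro fun A hA _ => ?_
  have hmeas : Measurable (dilateAt a r) := (contDiff_dilateAt a r).continuous.measurable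
  rw [Measure.map_apply hmeas hA, Measure.restrict_apply (hmeas hA), Measure.smul_apply,
    Measure.restrict_apply hA, smul_eq_mul, ← volume_preimage_dilateAt a hr]
  exact measure_mono fun u hu => ⟨hu.1, hUS hu.2⟩

lemma eLpNorm_comp_dilateAt_le {F : Type*} [NormedAddCommGroup F] {g : Heis n → F} {a : Heis n}
    {r : ℝ} (hr : 0 < r) (hUS : Set.MapsTo (dilateAt a r) U S) (hg : Continuous g) :
    eLpNorm (fun u => g (dilateAt a r u)) 2 (volume.restrict U) ≤
      ENNReal.ofReal (r ^ (n + 1))⁻¹ * eLpNorm g 2 (volume.restrict S) := by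
  have hsqrt : ENNReal.ofReal (r ^ (2 * n + 2))⁻¹ ^ (1 / 2 : ℝ≥0∞).toReal =
      ENNReal.ofReal (r ^ (n + 1))⁻¹ := by
    rw [show (r ^ (2 * n + 2))⁻¹ = ((r ^ (n + 1))⁻¹) ^ 2 by ring,
      ENNReal.ofReal_pow (by positivity), ← ENNReal.rpow_natCast_mul]
    norm_num
  calc eLpNorm (g ∘ dilateAt a r) 2 (volume.restrict U)
      = eLpNorm g 2 ((volume.restrict U).map (dilateAt a r)) :=
        (eLpNorm_map_measure hg.aestronglyMeasurable
          (contDiff_dilateAt a r).continuous.aemeasurable).symm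
    _ ≤ eLpNorm g 2 (ENNReal.ofReal (r ^ (2 * n + 2))⁻¹ • volume.restrict S) :=
        eLpNorm_mono_measure g (map_dilateAt_restrict_le hr hUS)
    _ = ENNReal.ofReal (r ^ (n + 1))⁻¹ * eLpNorm g 2 (volume.restrict S) := by
        rw [eLpNorm_smul_measure_of_ne_top ENNReal.ofNat_ne_top, hsqrt, smul_eq_mul]

/-- The derivatives `X_J g` of order at most `l` have `L²` norm at most `N` on `S`. -/
def HSobolevLE (l : ℕ) (S : Set (Heis n)) (g : Heis n → E) (N : ℝ≥0) : Prop :=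
  ∀ J : List (Fin (2 * n)), J.length ≤ l → eLpNorm (XI n J g) 2 (volume.restrict S) ≤ N

lemma HSobolevLE.mono {l' : ℕ} (hg : HSobolevLE l S g N) (hl : l' ≤ l) : HSobolevLE l' S g N :=
  fun J hJ => hg J (hJ.trans hl)

protected lemma HSobolevLE.XI {J : List (Fin (2 * n))} (hg : HSobolevLE (l + J.length) S g N) :
    HSobolevLE l S (XI n J g) N := fun I hI => by
  rw [← XI_append]
  exact hg (I ++ J) (by simpa using hI)

lemma enorm_integral_smul_le {X : Type*} [MeasurableSpace X] {μ : Measure X} {φ : X → ℝ} {g : X → E}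
    (hφ : AEStronglyMeasurable φ μ) (hg : AEStronglyMeasurable g μ) :
    ‖∫ x, φ x • g x ∂μ‖ₑ ≤ eLpNorm φ 2 μ * eLpNorm g 2 μ := calc
  ‖∫ x, φ x • g x ∂μ‖ₑ ≤ eLpNorm (fun x => φ x • g x) 1 μ := by
    rw [eLpNorm_one_eq_lintegral_enorm]
    exact enorm_integral_le_lintegral_enorm _
  _ ≤ eLpNorm φ 2 μ * eLpNorm g 2 μ := eLpNorm_smul_le_mul_eLpNorm hg hφ

lemma norm_dilationAverage_le (hφ : IsTestFunction U φ) {a : Heis n} {r : ℝ} (hr : 0 < r)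
    (hUS : Set.MapsTo (dilateAt a r) U S) (hg : Continuous g)
    (hN : eLpNorm g 2 (volume.restrict S) ≤ N) :
    ‖dilationAverage φ g a r‖ ≤ (eLpNorm φ 2).toReal * (r ^ (n + 1))⁻¹ * N := by
  have hgr : Continuous fun u => g (dilateAt a r u) := hg.comp (contDiff_dilateAt a r).continuous
  have hsupp : dilationAverage φ g a r = ∫ u in U, φ u • g (dilateAt a r u) := by
    refine (setIntegral_eq_integral_of_forall_compl_eq_zero fun u hu => ?_).symm
    rw [image_eq_zero_of_notMem_tsupport fun h => hu (hφ.tsupport_subset h), zero_smul]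
  have hbound : ‖dilationAverage φ g a r‖ₑ ≤
      eLpNorm φ 2 * (ENNReal.ofReal (r ^ (n + 1))⁻¹ * N) := by
    rw [hsupp]
    refine (enorm_integral_smul_le hφ.contDiff.continuous.aestronglyMeasurable
      hgr.aestronglyMeasurable).trans (mul_le_mul' ?_ ?_)
    · exact eLpNorm_mono_measure φ Measure.restrict_le_self
    · exact (eLpNorm_comp_dilateAt_le hr hUS hg).trans (mul_le_mul_right hN _)
  have hfin := ENNReal.toReal_mono (ENNReal.mul_ne_top hφ.memLp.eLpNorm_ne_top
    (ENNReal.mul_ne_top ENNReal.ofReal_ne_top ENNReal.coe_ne_top)) hbound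
  rw [toReal_enorm, ENNReal.toReal_mul, ENNReal.toReal_mul, ENNReal.coe_toReal,
    ENNReal.toReal_ofReal (inv_nonneg.2 (pow_nonneg hr.le _))] at hfin
  rwa [mul_assoc]

variable (E) in
/-- Averages over dilates of size `r ≤ 1` of smooth functions with `l` horizontal derivatives in
`L²` are `O(r ^ e)`, with a constant that depends on the weight only. -/
def AverageBound (U : Set (Heis n)) (l : ℕ) (e : ℝ) : Prop :=
  ∀ φ, IsTestFunction U φ → ∃ C ≥ 0, ∀ (S : Set (Heis n)) (a : Heis n),
    (∀ r ∈ Set.Ioc (0 : ℝ) 1, Set.MapsTo (dilateAt a r) U S) →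
    ∀ g : Heis n → E, ContDiff ℝ ∞ g → ∀ N : ℝ≥0, HSobolevLE l S g N →
    ∀ r ∈ Set.Ioc (0 : ℝ) 1, ‖dilationAverage φ g a r‖ ≤ C * r ^ e * N

/-- Cauchy-Schwarz gives the exponent `-(n + 1)`. The extra `-1/2` keeps the exponents to be
integrated in `averageBound_succ` away from `-1`, so that no logarithm appears. -/
lemma averageBound_zero : AverageBound E U 0 (-(n + 3 / 2)) := by
  intro φ hφ
  refine ⟨(eLpNorm φ 2).toReal, ENNReal.toReal_nonneg, fun S a hUS g hg N hN r hr => ?_⟩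
  refine (norm_dilationAverage_le hφ hr.1 (hUS r hr) hg.continuous (hN [] le_rfl)).trans ?_
  gcongr
  rw [← Real.rpow_natCast, ← Real.rpow_neg hr.1.le]
  refine Real.rpow_le_rpow_of_exponent_ge hr.1 hr.2 ?_
  push_cast
  linarith

lemma norm_sub_le_of_norm_deriv_le_rpow {A A' : ℝ → E} {K e r : ℝ} (he : e + 1 ≠ 0)
    (hr : r ∈ Set.Ioc (0 : ℝ) 1) (hA : ∀ s ∈ Set.Ioc (0 : ℝ) 1, HasDerivAt A (A' s) s)
    (hA' : ∀ s ∈ Set.Ioc (0 : ℝ) 1, ‖A' s‖ ≤ K * s ^ e) :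
    ‖A 1 - A r‖ ≤ K / |e + 1| * r ^ min (e + 1) 0 := by
  have hK : 0 ≤ K := by simpa using (norm_nonneg _).trans (hA' 1 ⟨one_pos, le_rfl⟩)
  have hsub {s : ℝ} (hs : s ∈ Set.Icc r 1) : s ∈ Set.Ioc (0 : ℝ) 1 := ⟨hr.1.trans_le hs.1, hs.2⟩
  have hprim (s : ℝ) (hs : s ∈ Set.Icc r 1) :
      HasDerivAt (fun s => K * ((s ^ (e + 1) - r ^ (e + 1)) / (e + 1))) (K * s ^ e) s := by
    refine ((((Real.hasDerivAt_rpow_const (Or.inl (hsub hs).1.ne')).sub_const _).div_const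
      (e + 1)).const_mul K).congr_deriv ?_
    rw [add_sub_cancel_right, mul_div_cancel_left₀ _ he]
  have hbound : ‖A 1 - A r‖ ≤ K * ((1 ^ (e + 1) - r ^ (e + 1)) / (e + 1)) :=
    image_norm_le_of_norm_deriv_right_le_deriv_boundary' (f := fun s => A s - A r)
      (fun s hs => ((hA s (hsub hs)).sub_const _).continuousAt.continuousWithinAt)
      (fun s hs => ((hA s (hsub (Set.Ico_subset_Icc_self hs))).sub_const _).hasDerivWithinAt)
      (by simp) (fun s hs => (hprim s hs).continuousAt.continuousWithinAt)
      (fun s hs => (hprim s (Set.Ico_subset_Icc_self hs)).hasDerivWithinAt)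
      (fun s hs => hA' s (hsub (Set.Ico_subset_Icc_self hs))) (Set.right_mem_Icc.2 hr.2)
  refine hbound.trans ?_
  rw [Real.one_rpow, div_mul_eq_mul_div, mul_div_assoc]
  refine mul_le_mul_of_nonneg_left ?_ hK
  have hpos := Real.rpow_pos_of_pos hr.1 (e + 1)
  rcases he.lt_or_gt with h | h
  · rw [min_eq_left h.le, abs_of_neg h, div_neg, ← neg_div, div_le_div_right_of_neg h]
    linarith
  · rw [min_eq_right h.le, abs_of_pos h, Real.rpow_zero]
    gcongr
    linarith

lemma AverageBound.exists_norm_deriv_le (hn : 1 ≤ n) (h : AverageBound E U l e)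
    (hφ : IsTestFunction U φ) : ∃ C ≥ 0, ∀ (S : Set (Heis n)) (a : Heis n),
      (∀ r ∈ Set.Ioc (0 : ℝ) 1, Set.MapsTo (dilateAt a r) U S) →
      ∀ g : Heis n → E, ContDiff ℝ ∞ g → ∀ N : ℝ≥0, HSobolevLE (l + 1) S g N →
      ∀ r ∈ Set.Ioc (0 : ℝ) 1, ‖deriv (dilationAverage φ g a) r‖ ≤ C * N * r ^ e := by
  let j : Fin n := ⟨0, hn⟩
  have hqφ := hφ.mul contDiff_eulerReebCoeff
  choose Cc hCc hcoord using fun i : Fin (2 * n) => h _ (hφ.coord_mul i.castSucc)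
  obtain ⟨Cx, hCx, hx⟩ := h _ (hqφ.hDeriv (xIdx j))
  obtain ⟨Cy, hCy, hy⟩ := h _ (hqφ.hDeriv (yIdx j))
  have hsum : 0 ≤ ∑ i, Cc i := Finset.sum_nonneg fun i _ => hCc i
  refine ⟨∑ i, Cc i + (Cx + Cy), by positivity, fun S a hUS g hg N hN r hr => ?_⟩
  rw [(hasDerivAt_dilationAverage hφ hg a r).deriv, smul_dilationAverage_T0Deriv hqφ hg a r j]
  have hhor := norm_sum_le_of_le Finset.univ fun i (_ : i ∈ Finset.univ) =>
    hcoord i S a hUS _ (contDiff_hDeriv i hg) N (hN.XI (J := [i])) r hr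
  have hX := hx S a hUS _ (contDiff_hDeriv (yIdx j) hg) N (hN.XI (J := [_])) r hr
  have hY := hy S a hUS _ (contDiff_hDeriv (xIdx j) hg) N (hN.XI (J := [_])) r hr
  refine (norm_add_le_of_le hhor (norm_sub_le_of_le hX hY)).trans_eq ?_
  simp only [mul_assoc, ← Finset.sum_mul]
  ring

lemma averageBound_succ (hn : 1 ≤ n) (he : e + 1 ≠ 0) (h : AverageBound E U l e) :
    AverageBound E U (l + 1) (min (e + 1) 0) := by
  intro φ hφ
  obtain ⟨C₀, hC₀, h₀⟩ := h φ hφ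
  obtain ⟨C₁, hC₁, h₁⟩ := h.exists_norm_deriv_le hn hφ
  refine ⟨C₀ + C₁ / |e + 1|, by positivity, fun S a hUS g hg N hN r hr => ?_⟩
  have hdiff := norm_sub_le_of_norm_deriv_le_rpow he hr
    (fun s _ => (hasDerivAt_dilationAverage hφ hg a s).differentiableAt.hasDerivAt)
    (h₁ S a hUS g hg N hN)
  have hone : ‖dilationAverage φ g a 1‖ ≤ C₀ * N := by
    simpa using h₀ S a hUS g hg N (hN.mono l.le_succ) 1 ⟨one_pos, le_rfl⟩
  have hpow : 1 ≤ r ^ min (e + 1) 0 :=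
    Real.one_le_rpow_of_pos_of_le_one_of_nonpos hr.1 hr.2 (min_le_right _ _)
  calc ‖dilationAverage φ g a r‖
      ≤ ‖dilationAverage φ g a 1‖ + ‖dilationAverage φ g a 1 - dilationAverage φ g a r‖ :=
        norm_le_norm_add_norm_sub _ _
    _ ≤ C₀ * N * r ^ min (e + 1) 0 + C₁ * N / |e + 1| * r ^ min (e + 1) 0 :=
        add_le_add (hone.trans (le_mul_of_one_le_right (by positivity) hpow)) hdiff
    _ = (C₀ + C₁ / |e + 1|) * r ^ min (e + 1) 0 * N := by ring

lemma averageBound (hn : 1 ≤ n) (U : Set (Heis n)) (l : ℕ) :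
    AverageBound E U l (min (l - (n + 3 / 2)) 0) := by
  induction l with
  | zero =>
    rw [Nat.cast_zero, zero_sub, min_eq_left (neg_nonpos.2 (by positivity))]
    exact averageBound_zero
  | succ l ih =>
    have hexp : min ((l : ℝ) - (n + 3 / 2)) 0 + 1 ≠ 0 := by
      have hparity : 2 * (l : ℝ) ≠ 2 * n + 1 := by
        norm_cast
        lia
      grind
    convert averageBound_succ hn hexp ih using 1
    push_cast
    grind

lemma exists_norm_le_of_hSobolevLE [CompleteSpace E] (hn : 1 ≤ n) (hU : U ∈ nhds 0) :
    ∃ C ≥ 0, ∀ (S : Set (Heis n)) (a : Heis n),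
      (∀ r ∈ Set.Ioc (0 : ℝ) 1, Set.MapsTo (dilateAt a r) U S) →
      ∀ g : Heis n → E, ContDiff ℝ ∞ g → ∀ N : ℝ≥0, HSobolevLE (n + 2) S g N →
      ‖g a‖ ≤ C * N := by
  obtain ⟨φ, hφU, hφc, hφ, hφ01, hφ0⟩ := exists_contDiff_tsupport_subset (n := ⊤) hU
  have htest : IsTestFunction U φ := ⟨hφ, hφc, hφU⟩
  have hpos : 0 < ∫ u, φ u :=
    hφ.continuous.integral_pos_of_hasCompactSupport_nonneg_nonzero hφc
      (fun u => (hφ01 ⟨u, rfl⟩).1) (x := 0) (by simp [hφ0])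
  obtain ⟨C, hC, hbound⟩ := averageBound (E := E) hn U (n + 2) φ htest
  refine ⟨C / ∫ u, φ u, by positivity, fun S a hUS g hg N hN => ?_⟩
  have hlim : Filter.Tendsto (fun r => ‖dilationAverage φ g a r‖) (nhdsWithin 0 (Set.Ioi 0))
      (nhds ‖(∫ u, φ u) • g a‖) := by
    rw [← dilationAverage_zero]
    exact (hasDerivAt_dilationAverage htest hg a 0).continuousAt.norm.tendsto.mono_left
      nhdsWithin_le_nhds
  have hexp : min (((n + 2 : ℕ) : ℝ) - (n + 3 / 2)) 0 = 0 :=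
    min_eq_right (by push_cast; linarith)
  rw [hexp] at hbound
  have hle : ‖(∫ u, φ u) • g a‖ ≤ C * N := by
    refine le_of_tendsto hlim ?_
    filter_upwards [Ioc_mem_nhdsGT one_pos] with r hr
    simpa using hbound S a hUS g hg N hN r hr
  rw [norm_smul, Real.norm_of_nonneg hpos.le] at hle
  rwa [div_mul_eq_mul_div, le_div_iff₀ hpos, mul_comm]

end Sobolev

/-! ### Coordinate derivatives in terms of horizontal ones -/

section CoordinateDerivatives

variable {n l : ℕ} {f g : Heis n → E} {x : Heis n} {M M' : ℝ}

/-- The derivatives `X_J f` of order at most `l` have norm at most `M` at `x`. -/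
def HJetLE (l : ℕ) (f : Heis n → E) (x : Heis n) (M : ℝ) : Prop :=
  ∀ J : List (Fin (2 * n)), J.length ≤ l → ‖XI n J f x‖ ≤ M

namespace HJetLE

lemma norm_le (hf : HJetLE l f x M) : ‖f x‖ ≤ M := hf [] (Nat.zero_le l)

lemma mono {l' : ℕ} (hf : HJetLE l f x M) (hl : l' ≤ l) (hM : M ≤ M') : HJetLE l' f x M' :=
  fun J hJ => (hf J (hJ.trans hl)).trans hM

protected lemma hDeriv (hf : HJetLE (l + 1) f x M) (j : Fin (2 * n)) :
    HJetLE l (hDeriv n j f) x M := fun J hJ => by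
  have := hf (J ++ [j]) (by simpa using hJ)
  rwa [XI_append] at this

lemma of_hDeriv (hf : ‖f x‖ ≤ M) (hX : ∀ j, HJetLE l (hDeriv n j f) x M) :
    HJetLE (l + 1) f x M := fun J hJ => by
  induction J using List.reverseRecOn with
  | nil => exact hf
  | append_singleton J j =>
    rw [XI_append]
    exact hX j J (by simpa using hJ)

lemma add (hf : ContDiff ℝ ∞ f) (hg : ContDiff ℝ ∞ g) (hfM : HJetLE l f x M)
    (hgM : HJetLE l g x M') : HJetLE l (fun y => f y + g y) x (M + M') := fun J hJ => by
  have hXI : XI n J (fun y => f y + g y) = fun y => XI n J f y + XI n J g y := by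
    clear hJ
    induction J with
    | nil => rfl
    | cons j J ih =>
      funext y
      rw [XI, ih]
      exact hDeriv_add j ((contDiff_XI J hf).differentiable (by simp) y)
        ((contDiff_XI J hg).differentiable (by simp) y)
  rw [hXI]
  exact norm_add_le_of_le (hfM J hJ) (hgM J hJ)

lemma neg (hf : HJetLE l f x M) : HJetLE l (fun y => -f y) x M := fun J hJ => by
  have hXI : XI n J (fun y => -f y) = fun y => -XI n J f y := by
    clear hJ
    induction J with
    | nil => rfl
    | cons j J ih =>
      funext y
      rw [XI, ih, hDeriv, fderiv_fun_neg]
      rfl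
  rw [hXI, norm_neg]
  exact hf J hJ

protected lemma T0Deriv (hn : 1 ≤ n) (hf : ContDiff ℝ ∞ f) (hM : HJetLE (l + 2) f x M) :
    HJetLE l (T0Deriv n f) x (2 * M) := by
  let j : Fin n := ⟨0, hn⟩
  have hcomm : T0Deriv n f = fun y => hDeriv n (yIdx j) (hDeriv n (xIdx j) f) y +
      -hDeriv n (xIdx j) (hDeriv n (yIdx j) f) y :=
    funext fun y => (T0Deriv_eq_commutator j (contDiff_infty.1 hf 2) y).trans (sub_eq_add_neg _ _)
  have hXX (i k : Fin (2 * n)) := contDiff_hDeriv i (contDiff_hDeriv k hf)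
  rw [hcomm, two_mul M]
  exact ((hM.hDeriv _).hDeriv _).add (hXX _ _) (hXX _ _).neg ((hM.hDeriv _).hDeriv _).neg

end HJetLE

variable {K : Set (Heis n)}

variable (E) in
lemma exists_norm_smul_le (hK : IsCompact K) {p : Heis n → ℝ} (hp : Continuous p) :
    ∃ C ≥ 0, ∀ f : Heis n → E, ∀ x ∈ K, ∀ M, ‖f x‖ ≤ M → ‖p x • f x‖ ≤ C * M := by
  obtain ⟨C, hC⟩ := hK.exists_bound_of_continuousOn hp.continuousOn
  refine ⟨|C|, abs_nonneg C, fun f x hx M hM => ?_⟩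
  rw [norm_smul]
  exact mul_le_mul ((hC x hx).trans (le_abs_self C)) hM (norm_nonneg _) (abs_nonneg C)

variable (E) in
lemma exists_hJetLE_smul (hK : IsCompact K) (l : ℕ) {p : Heis n → ℝ} (hp : ContDiff ℝ ∞ p) :
    ∃ C ≥ 0, ∀ f : Heis n → E, ContDiff ℝ ∞ f → ∀ x ∈ K, ∀ M,
      HJetLE l f x M → HJetLE l (fun y => p y • f y) x (C * M) := by
  induction l generalizing p with
  | zero =>
    obtain ⟨C, hC, hbound⟩ := exists_norm_smul_le E hK hp.continuous
    refine ⟨C, hC, fun f _ x hx M hM J hJ => ?_⟩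
    rw [List.length_eq_zero_iff.1 (Nat.le_zero.1 hJ)]
    exact hbound f x hx M hM.norm_le
  | succ l ih =>
    obtain ⟨C₀, hC₀, h₀⟩ := exists_norm_smul_le E hK hp.continuous
    obtain ⟨C₁, hC₁, h₁⟩ := ih hp
    choose C₂ hC₂ h₂ using fun j => ih (contDiff_hDeriv j hp)
    have hsum : 0 ≤ ∑ j, C₂ j := Finset.sum_nonneg fun j _ => hC₂ j
    refine ⟨C₀ + (C₁ + ∑ j, C₂ j), by positivity, fun f hf x hx M hM => ?_⟩
    have hM0 : 0 ≤ M := (norm_nonneg _).trans hM.norm_le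
    refine .of_hDeriv ?_ fun j => ?_
    · refine (h₀ f x hx M hM.norm_le).trans ?_
      gcongr
      exact le_add_of_nonneg_right (by positivity)
    · have hleibniz : hDeriv n j (fun y => p y • f y) =
          fun y => p y • hDeriv n j f y + hDeriv n j p y • f y :=
        funext fun y =>
          hDeriv_smul j (hp.differentiable (by simp) y) (hf.differentiable (by simp) y)
      rw [hleibniz]
      refine (HJetLE.add (hp.smul (contDiff_hDeriv j hf)) ((contDiff_hDeriv j hp).smul hf)
        (h₁ _ (contDiff_hDeriv j hf) x hx M (hM.hDeriv j))
        (h₂ j f hf x hx M (hM.mono l.le_succ le_rfl))).mono le_rfl ?_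
      rw [← add_mul]
      refine mul_le_mul_of_nonneg_right ?_ hM0
      have : C₂ j ≤ ∑ j, C₂ j := Finset.single_le_sum (fun i _ => hC₂ i) (Finset.mem_univ j)
      linarith

variable (E) in
lemma exists_hJetLE_pDeriv (hn : 1 ≤ n) (hK : IsCompact K) (l : ℕ) (i : Fin (2 * n + 1)) :
    ∃ C ≥ 0, ∀ f : Heis n → E, ContDiff ℝ ∞ f → ∀ x ∈ K, ∀ M,
      HJetLE (l + 2) f x M → HJetLE l (pDeriv n i f) x (C * M) := by
  cases i using Fin.lastCases with
  | last =>
    exact ⟨2, zero_le_two, fun f hf x _ M hM => hM.T0Deriv hn hf⟩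
  | cast j =>
    have hp : ContDiff ℝ ∞ fun x => -reebCoeff n j x := (reebCoeff n j).contDiff.neg
    obtain ⟨C, hC, hsmul⟩ := exists_hJetLE_smul E hK l hp
    refine ⟨1 + C * 2, by positivity, fun f hf x hx M hM => ?_⟩
    have hpDeriv : pDeriv n j.castSucc f =
        fun y => hDeriv n j f y + -reebCoeff n j y • T0Deriv n f y := by
      funext y
      rw [hDeriv_eq, neg_smul, add_neg_cancel_right]
    rw [hpDeriv, add_mul, one_mul, mul_assoc]
    exact ((hM.mono (l + 1).le_succ le_rfl).hDeriv j).add (contDiff_hDeriv j hf)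
      (hp.smul (contDiff_T0Deriv hf)) (hsmul _ (contDiff_T0Deriv hf) x hx _ (hM.T0Deriv hn hf))

variable (E) in
lemma exists_norm_pI_le_of_hJetLE (hn : 1 ≤ n) (hK : IsCompact K) (k : ℕ) :
    ∃ C ≥ 0, ∀ f : Heis n → E, ContDiff ℝ ∞ f → ∀ x ∈ K, ∀ M, HJetLE (2 * k) f x M →
      ∀ I : List (Fin (2 * n + 1)), I.length ≤ k → ‖pI n I f x‖ ≤ C * M := by
  induction k with
  | zero =>
    refine ⟨1, zero_le_one, fun f _ x _ M hM I hI => ?_⟩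
    rw [List.length_eq_zero_iff.1 (Nat.le_zero.1 hI), one_mul]
    exact hM.norm_le
  | succ k ih =>
    obtain ⟨C, hC, hbound⟩ := ih
    choose Cp hCp hpDeriv using exists_hJetLE_pDeriv E hn hK (2 * k)
    have hsum : 0 ≤ ∑ i, Cp i := Finset.sum_nonneg fun i _ => hCp i
    refine ⟨1 + C * ∑ i, Cp i, by positivity, fun f hf x hx M hM I hI => ?_⟩
    have hM0 : 0 ≤ M := (norm_nonneg _).trans hM.norm_le
    induction I using List.reverseRecOn with
    | nil => exact hM.norm_le.trans (le_mul_of_one_le_left hM0 (by linarith [mul_nonneg hC hsum]))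
    | append_singleton I i =>
      rw [pI_append]
      refine (hbound _ (contDiff_pDeriv i hf) x hx _ (hpDeriv i f hf x hx M hM) I
        (by simpa using hI)).trans ?_
      rw [← mul_assoc]
      gcongr
      exact (mul_le_mul_of_nonneg_left
        (Finset.single_le_sum (fun i _ => hCp i) (Finset.mem_univ i)) hC).trans
        (le_add_of_nonneg_left zero_le_one)

end CoordinateDerivatives

/-! ### Smoothness up to the boundary -/

section SmoothUpToBoundary

variable {V F : Type*} [NormedAddCommGroup V] [NormedSpace ℝ V] [NormedAddCommGroup F]
  [NormedSpace ℝ F] {D : Set V} {f : V → F}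

lemma isBounded_image_of_forall_tendsto {X Y : Type*} [TopologicalSpace X] [PseudoMetricSpace Y]
    {s : Set X} {h : X → Y} (hs : IsCompact (closure s))
    (hh : ∀ x ∈ closure s, ∃ y, Filter.Tendsto h (nhdsWithin x s) (nhds y)) :
    IsBounded (h '' s) := by
  have hlocal : IsBounded (h '' (closure s ∩ s)) := by
    refine hs.induction_on (p := fun t => IsBounded (h '' (t ∩ s))) (by simp)
      (fun t t' htt' ht' => ht'.subset (Set.image_mono (Set.inter_subset_inter_left s htt')))
      (fun t t' ht ht' => ?_) fun x hx => ?_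
    · rw [Set.union_inter_distrib_right, Set.image_union]
      exact ht.union ht'
    · obtain ⟨y, hy⟩ := hh x hx
      obtain ⟨t, ht, hbdd⟩ := Metric.exists_isBounded_image_of_tendsto hy
      obtain ⟨u, hu, hut⟩ := mem_nhdsWithin_iff_exists_mem_nhds_inter.1 ht
      exact ⟨u, mem_nhdsWithin_of_mem_nhds hu, hbdd.subset (Set.image_mono hut)⟩
  rwa [Set.inter_eq_self_of_subset_right subset_closure] at hlocal

/-- Near each point of `closure D`, and to every order, `f` agrees on `D` with a function that is
differentiable up to that point. The values of `f` outside `D`, where `fderiv` carries no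
information, are irrelevant. -/
def SmoothUpToBoundary (D : Set V) (f : V → F) : Prop :=
  ∀ x ∈ closure D, ∀ m : ℕ, ∃ g : V → F, ContDiffWithinAt ℝ m g D x ∧ g =ᶠ[nhdsWithin x D] f

namespace SmoothUpToBoundary

lemma of_contDiffOn_closure (hf : ContDiffOn ℝ ∞ f (closure D)) : SmoothUpToBoundary D f :=
  fun x hx _ => ⟨f, ((hf x hx).of_le (mod_cast le_top)).mono subset_closure, .rfl⟩

lemma fderiv_apply (hD : IsOpen D) (hf : SmoothUpToBoundary D f) {v : V → V} (hv : ContDiff ℝ ∞ v) :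
    SmoothUpToBoundary D fun x => fderiv ℝ f x (v x) := by
  intro x hx m
  obtain ⟨g, hg, hgf⟩ := hf x hx (m + 1)
  obtain ⟨u, hu, -, -, g', hg', hg'm⟩ :=
    (contDiffWithinAt_succ_iff_hasFDerivWithinAt' (n := m) (by simp)).1 (mod_cast hg)
  refine ⟨fun y => g' y (v y),
    hg'm.clm_apply (hv.of_le (mod_cast le_top)).contDiffWithinAt, ?_⟩
  filter_upwards [self_mem_nhdsWithin, nhdsWithin_mono x (Set.subset_insert x D) hu,
    eventually_eventually_nhdsWithin.2 hgf] with y hyD hyu hyf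
  rw [hD.nhdsWithin_eq hyD] at hyf
  have hfderiv : HasFDerivAt g (g' y) y :=
    (hg' y hyu).hasFDerivAt (hD.mem_nhds hyD)
  rw [← Filter.EventuallyEq.fderiv_eq hyf, hfderiv.fderiv]

lemma continuousOn (hf : SmoothUpToBoundary D f) : ContinuousOn f D := fun x hx => by
  obtain ⟨g, hg, hgf⟩ := hf x (subset_closure hx) 0
  exact hg.continuousWithinAt.congr_of_eventuallyEq_of_mem hgf.symm hx

lemma exists_tendsto (hf : SmoothUpToBoundary D f) {x : V} (hx : x ∈ closure D) :
    ∃ y, Filter.Tendsto f (nhdsWithin x D) (nhds y) := by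
  obtain ⟨g, hg, hgf⟩ := hf x hx 0
  exact ⟨g x, hg.continuousWithinAt.tendsto.congr' hgf⟩

lemma memLp [FiniteDimensional ℝ V] [MeasurableSpace V] [BorelSpace V] {μ : Measure V}
    [IsFiniteMeasureOnCompacts μ] (hf : SmoothUpToBoundary D f) (hD : IsOpen D)
    (hDb : IsBounded D) (p : ℝ≥0∞) : MemLp f p (μ.restrict D) := by
  have : ProperSpace V := FiniteDimensional.proper_real V
  have : IsFiniteMeasure (μ.restrict D) := ⟨by simpa using hDb.measure_lt_top⟩
  obtain ⟨C, hC⟩ := (isBounded_image_of_forall_tendsto hDb.isCompact_closure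
    fun x hx => hf.exists_tendsto hx).exists_norm_le
  exact .of_bound (hf.continuousOn.aestronglyMeasurable hD.measurableSet) C
    (ae_restrict_of_forall_mem hD.measurableSet fun x hx => hC _ (Set.mem_image_of_mem f hx))

lemma XI {n : ℕ} {D : Set (Heis n)} {f : Heis n → F} (hD : IsOpen D) (hf : SmoothUpToBoundary D f)
    (J : List (Fin (2 * n))) : SmoothUpToBoundary D (XI n J f) := by
  induction J with
  | nil => exact hf
  | cons j J ih => exact ih.fderiv_apply hD (contDiff_Xvec j)

end SmoothUpToBoundary

end SmoothUpToBoundary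

/-! ### Folland-Stein norm and localization -/

section Localization

variable {n s : ℕ} {D K V : Set (Heis n)} {f g : Heis n → E} {N : ℝ≥0}

lemma eqOn_XI (hV : IsOpen V) (hfg : Set.EqOn f g V) (J : List (Fin (2 * n))) :
    Set.EqOn (XI n J f) (XI n J g) V := by
  induction J with
  | nil => exact hfg
  | cons j J ih =>
    intro x hx
    rw [XI, XI, hDeriv, hDeriv, (ih.eventuallyEq_of_mem (hV.mem_nhds hx)).fderiv_eq]

lemma eqOn_pI (hV : IsOpen V) (hfg : Set.EqOn f g V) (I : List (Fin (2 * n + 1))) :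
    Set.EqOn (pI n I f) (pI n I g) V := by
  induction I with
  | nil => exact hfg
  | cons i I ih =>
    intro x hx
    rw [pI, pI, pDeriv, pDeriv, (ih.eventuallyEq_of_mem (hV.mem_nhds hx)).fderiv_eq]

lemma HSobolevLE.congr_of_subset (hf : HSobolevLE s D f N) (hV : IsOpen V) (hVD : V ⊆ D)
    (hfg : Set.EqOn f g V) : HSobolevLE s V g N := fun J hJ => by
  rw [eLpNorm_congr_ae (ae_restrict_of_forall_mem hV.measurableSet (eqOn_XI hV hfg.symm J))]
  exact (eLpNorm_mono_measure _ (Measure.restrict_mono_set volume hVD)).trans (hf J hJ)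

lemma integral_norm_XI_sq_le_fsNormSq (D : Set (Heis n)) (f : Heis n → E) {J : List (Fin (2 * n))}
    (hJ : J.length ≤ s) : ∫ x in D, ‖XI n J f x‖ ^ 2 ≤ fsNormSq n D s f := by
  have hnonneg (t : ℕ) (I : Fin t → Fin (2 * n)) : 0 ≤ ∫ x in D, ‖XI n (List.ofFn I) f x‖ ^ 2 := by
    positivity
  calc ∫ x in D, ‖XI n J f x‖ ^ 2
      = ∫ x in D, ‖XI n (List.ofFn J.get) f x‖ ^ 2 := by rw [List.ofFn_get]
    _ ≤ ∑ I : Fin J.length → Fin (2 * n), ∫ x in D, ‖XI n (List.ofFn I) f x‖ ^ 2 :=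
        Finset.single_le_sum (fun I _ => hnonneg _ I) (Finset.mem_univ J.get)
    _ ≤ fsNormSq n D s f :=
        Finset.single_le_sum (f := fun t => ∑ I : Fin t → Fin (2 * n),
          ∫ x in D, ‖XI n (List.ofFn I) f x‖ ^ 2)
          (fun t _ => Finset.sum_nonneg fun I _ => hnonneg t I)
          (Finset.mem_range.2 (Nat.lt_succ_of_le hJ))

/-- A divergent integral in `fsNormSq` has the junk value `0`. -/
lemma hSobolevLE_fsNorm
    (hf : ∀ J : List (Fin (2 * n)), J.length ≤ s → MemLp (XI n J f) 2 (volume.restrict D)) :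
    HSobolevLE s D f (fsNorm n D s f).toNNReal := fun J hJ => by
  rw [(hf J hJ).eLpNorm_eq_integral_rpow_norm two_ne_zero ENNReal.ofNat_ne_top]
  refine ENNReal.ofReal_le_ofReal ?_
  simp only [ENNReal.toReal_ofNat, Real.rpow_ofNat]
  rw [fsNorm, Real.sqrt_eq_rpow, one_div]
  exact Real.rpow_le_rpow (by positivity) (integral_norm_XI_sq_le_fsNormSq D f hJ) (by norm_num)

lemma exists_contDiff_eqOn {W F : Type*} [NormedAddCommGroup W] [NormedSpace ℝ W]
    [FiniteDimensional ℝ W] [NormedAddCommGroup F] [NormedSpace ℝ F] {D K : Set W} {f : W → F}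
    (hD : IsOpen D) (hK : IsClosed K) (hKD : K ⊆ D) (hf : ContDiffOn ℝ ∞ f D) :
    ∃ g : W → F, ContDiff ℝ ∞ g ∧ Set.EqOn f g K := by
  obtain ⟨χ, hχ0, hχ1, -⟩ := exists_contMDiffMap_zero_one_nhds_of_isClosed (n := ⊤)
    (modelWithCornersSelf ℝ W) hD.isClosed_compl hK
    (Set.disjoint_left.2 fun x hx hxK => hx (hKD hxK))
  have hχ : ContDiff ℝ ∞ χ := χ.contMDiff.contDiff
  refine ⟨fun x => χ x • f x, contDiff_iff_contDiffAt.2 fun x => ?_, fun x hx => ?_⟩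
  · by_cases hx : x ∈ D
    · exact hχ.contDiffAt.smul (hf.contDiffAt (hD.mem_nhds hx))
    · refine (contDiffAt_const (c := 0)).congr_of_eventuallyEq ?_
      filter_upwards [hχ0.filter_mono (nhds_le_nhdsSet hx)] with y hy
      rw [hy, zero_smul]
  · have hx1 : χ x = 1 := (hχ1.filter_mono (nhds_le_nhdsSet hx)).self_of_nhds
    simp [hx1]

lemma exists_nhds_mapsTo_dilateAt (hK : IsCompact K) (hV : IsOpen V) (hKV : K ⊆ V) :
    ∃ U ∈ nhds (0 : Heis n), ∀ a ∈ K, ∀ r ∈ Set.Icc (0 : ℝ) 1,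
      Set.MapsTo (dilateAt a r) U V := by
  have hcenter : (K ×ˢ Set.Icc (0 : ℝ) 1) ×ˢ {(0 : Heis n)} ⊆
      (fun p : (Heis n × ℝ) × Heis n => dilateAt p.1.1 p.1.2 p.2) ⁻¹' V := by
    rintro ⟨⟨a, r⟩, u⟩ ⟨⟨ha, -⟩, rfl⟩
    rw [Set.mem_preimage, dilateAt_apply_zero]
    exact hKV ha
  obtain ⟨A, U, -, hU, hKA, h0U, hAU⟩ := generalized_tube_lemma (hK.prod isCompact_Icc)
    isCompact_singleton (hV.preimage continuous_dilateAt) hcenter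
  exact ⟨U, hU.mem_nhds (h0U rfl), fun a ha r hr u hu =>
    @hAU ((a, r), u) ⟨hKA ⟨ha, hr⟩, hu⟩⟩

variable [CompleteSpace E]

variable (E) in
lemma exists_hJetLE_of_hSobolevLE (hn : 1 ≤ n) (hK : IsCompact K) (hV : IsOpen V) (hKV : K ⊆ V) :
    ∃ C ≥ 0, ∀ g : Heis n → E, ContDiff ℝ ∞ g → ∀ (l : ℕ) (N : ℝ≥0),
      HSobolevLE (l + n + 2) V g N → ∀ x ∈ K, HJetLE l g x (C * N) := by
  obtain ⟨U, hU, hUV⟩ := exists_nhds_mapsTo_dilateAt hK hV hKV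
  obtain ⟨C, hC, hbound⟩ := exists_norm_le_of_hSobolevLE (E := E) hn hU
  refine ⟨C, hC, fun g hg l N hN x hx J hJ => ?_⟩
  exact hbound V x (fun r hr => hUV x hx r (Set.Ioc_subset_Icc_self hr)) _ (contDiff_XI J hg) N
    (hN.mono (by omega)).XI

variable (E) in
lemma exists_norm_pI_le_of_hSobolevLE (hn : 1 ≤ n) (k : ℕ) (hK : IsCompact K) (hV : IsOpen V)
    (hKV : K ⊆ V) :
    ∃ C ≥ 0, ∀ g : Heis n → E, ContDiff ℝ ∞ g → ∀ N : ℝ≥0, HSobolevLE (2 * k + n + 2) V g N →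
      ∀ I : List (Fin (2 * n + 1)), I.length ≤ k → ∀ x ∈ K, ‖pI n I g x‖ ≤ C * N := by
  obtain ⟨C₁, hC₁, hjet⟩ := exists_hJetLE_of_hSobolevLE E hn hK hV hKV
  obtain ⟨C₂, hC₂, hpI⟩ := exists_norm_pI_le_of_hJetLE E hn hK k
  refine ⟨C₂ * C₁, by positivity, fun g hg N hN I hI x hx => ?_⟩
  rw [mul_assoc]
  exact hpI g hg x hx _ (hjet g hg _ N hN x hx) I hI

variable (E) in
theorem statement2_general (hn : 1 ≤ n) (k : ℕ) (hD : IsOpen D) (hK : IsCompact K) (hKD : K ⊆ D) :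
    ∃ C > 0, ∀ f : Heis n → E, ContDiffOn ℝ ∞ f D →
      (∀ J : List (Fin (2 * n)), J.length ≤ 2 * k + n + 2 →
        MemLp (XI n J f) 2 (volume.restrict D)) →
      ∀ I : List (Fin (2 * n + 1)), I.length ≤ k → ∀ x ∈ K,
        ‖pI n I f x‖ ≤ C * fsNorm n D (2 * k + n + 2) f := by
  obtain ⟨L, hL, hKL, hLD⟩ := exists_compact_between hK hD hKD
  obtain ⟨C, hC, hbound⟩ := exists_norm_pI_le_of_hSobolevLE E hn k hK isOpen_interior hKL
  refine ⟨C + 1, by positivity, fun f hf hLp I hI x hx => ?_⟩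
  obtain ⟨g, hg, hfg⟩ := exists_contDiff_eqOn hD hL.isClosed hLD hf
  have hfg' : Set.EqOn f g (interior L) := hfg.mono interior_subset
  have hN := (hSobolevLE_fsNorm hLp).congr_of_subset isOpen_interior
    (interior_subset.trans hLD) hfg'
  have hfs : 0 ≤ fsNorm n D (2 * k + n + 2) f := Real.sqrt_nonneg _
  calc ‖pI n I f x‖ = ‖pI n I g x‖ := by rw [eqOn_pI isOpen_interior hfg' I (hKL hx)]
    _ ≤ C * fsNorm n D (2 * k + n + 2) f := by simpa [hfs] using hbound g hg _ hN I hI x hx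
    _ ≤ (C + 1) * fsNorm n D (2 * k + n + 2) f :=
        mul_le_mul_of_nonneg_right (le_add_of_nonneg_right zero_le_one) hfs

end Localization

/-- for `s = 2k + n + 2`, all ordinary partial derivatives of order
`≤ k` are bounded on `cl D'` by `C ‖f‖_{D,s}`; in particular the `C^k(cl D')`-norm
of `f` is bounded by a constant times `‖f‖_{D,s}`. -/
theorem statement2 (n m k : ℕ) (hn : 1 ≤ n)
    (D D' : Set (Fin (2*n+1) → ℝ)) (hD : IsOpen D) (hDb : IsBounded D)
    (hD' : IsOpen D') (hD'b : IsBounded D') (hsub : closure D' ⊆ D) :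
    ∃ C > (0:ℝ), ∀ f : (Fin (2*n+1) → ℝ) → (Fin m → ℝ),
      ContDiffOn ℝ (⊤:ℕ∞) f (closure D) →
      ∀ I : List (Fin (2*n+1)), I.length ≤ k →
      ∀ x ∈ closure D', ‖pI n I f x‖ ≤ C * fsNorm n D (2*k + n + 2) f := by
  obtain ⟨C, hC, hbound⟩ :=
    statement2_general (Fin m → ℝ) hn k hD hD'b.isCompact_closure hsub
  exact ⟨C, hC, fun f hf => hbound f (hf.mono subset_closure) fun J _ =>
    ((SmoothUpToBoundary.of_contDiffOn_closure hf).XI hD J).memLp hD hDb 2⟩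

end
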